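/- arXiv:2305.07712 — 4 statements merged into one kernel-verified Lean document; each statement's English description precedes it below -/
import Mathlib

section
/- Fix σ > 0 and b ∈ ℝ. The function a ↦ s(a, b) = Σ_{n=0}^∞ (aⁿ / n!) · exp(−(b − n)² / (2σ²)) is differentiable on (0, ∞), and its derivative satisfies ∂s/∂a (a, b) = s(a, b − 1) for every a > 0. -/
open Real Set

/-- The Poisson–Gaussian likelihood series
`s(a, b) = Σ_{n=0}^∞ (aⁿ / n!) · exp(−(b − n)² / (2σ²))`. -/
noncomputable def pgS (σ a b : ℝ) : ℝ :=
  ∑' n : ℕ, a ^ n / (Nat.factorial n) * Real.exp (-(b - n) ^ 2 / (2 * σ ^ 2))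


theorem pgS_aux (n : ℕ) (y : ℝ) :
    ((n + 1 : ℕ) : ℝ) * y ^ (n + 1 - 1) / (Nat.factorial (n + 1)) = y ^ n / (Nat.factorial n) := by
  have h1 : ((n : ℝ) + 1) ≠ 0 := by positivity
  have h2 : (Nat.factorial n : ℝ) ≠ 0 := by positivity
  rw [Nat.factorial_succ, Nat.add_sub_cancel]
  push_cast
  field_simp

theorem pgS_hasDerivAt (σ : ℝ) (hσ : 0 < σ) (b : ℝ) :
    DifferentiableOn ℝ (fun a => pgS σ a b) (Set.Ioi (0 : ℝ)) ∧
    ∀ a : ℝ, 0 < a → HasDerivAt (fun a => pgS σ a b) (pgS σ a (b - 1)) a := by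
  have key : ∀ a : ℝ, 0 < a → HasDerivAt (fun a => pgS σ a b) (pgS σ a (b - 1)) a := by
    intro a ha
    have hw1 : ∀ n : ℕ, Real.exp (-(b - n) ^ 2 / (2 * σ ^ 2)) ≤ 1 := by
      intro n
      rw [Real.exp_le_one_iff]
      apply div_nonpos_of_nonpos_of_nonneg
      · nlinarith [sq_nonneg (b - n)]
      · positivity
    have hu : Summable (fun n : ℕ => (n : ℝ) * (a + 1) ^ (n - 1) / (Nat.factorial n)) := by
      rw [← summable_nat_add_iff 1]
      simp_rw [pgS_aux]
      exact Real.summable_pow_div_factorial _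
    have hb : ∀ (n : ℕ) (y : ℝ), y ∈ Set.Ioo 0 (a + 1) →
        ‖(n : ℝ) * y ^ (n - 1) / (Nat.factorial n) * Real.exp (-(b - n) ^ 2 / (2 * σ ^ 2))‖
          ≤ (n : ℝ) * (a + 1) ^ (n - 1) / (Nat.factorial n) := by
      intro n y hy
      have hy0 : 0 ≤ y := hy.1.le
      rw [Real.norm_of_nonneg (by positivity)]
      refine (mul_le_of_le_one_right (by positivity) (hw1 n)).trans ?_
      have := hy.2.le
      gcongr
    have ham : a ∈ Set.Ioo 0 (a + 1) := ⟨ha, by linarith⟩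
    have h := hasDerivAt_tsum_of_isPreconnected (𝕜 := ℝ) (y₀ := a) (y := a)
      (g := fun (n : ℕ) (y : ℝ) =>
        y ^ n / (Nat.factorial n) * Real.exp (-(b - n) ^ 2 / (2 * σ ^ 2)))
      hu isOpen_Ioo isPreconnected_Ioo
      (fun n y _ => ((hasDerivAt_pow n y).div_const _).mul_const _) hb ham
      (by
        refine Summable.of_nonneg_of_le (fun n => by positivity) (fun n => ?_)
          (Real.summable_pow_div_factorial a)
        exact mul_le_of_le_one_right (by positivity) (hw1 n)) ham
    have hs := Summable.of_norm_bounded hu (fun n => hb n a ham)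
    have e : (∑' n : ℕ, (n : ℝ) * a ^ (n - 1) / (Nat.factorial n) *
        Real.exp (-(b - n) ^ 2 / (2 * σ ^ 2))) = pgS σ a (b - 1) := by
      rw [hs.tsum_eq_zero_add, pgS]
      simp_rw [pgS_aux]
      simp only [Nat.cast_zero, zero_mul, zero_div, zero_add]
      refine tsum_congr fun n => ?_
      push_cast
      ring_nf
    rw [← e]
    exact h
  exact ⟨fun a ha => (key a ha).differentiableAt.differentiableWithinAt, key⟩
end

section
/- Fix σ > 0 and v ∈ ℝ. The function t ↦ t − log s(t, v) is differentiable on (0, ∞) and its derivative at every t > 0 equals φ(t; v) = 1 − s(t, v − 1)/s(t, v). Consequently, the derivative of the negative log-likelihood −log( e^{−t} s(t, v) / √(2πσ²) ) with respect to t equals φ(t; v). -/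
open Real Set

/-- `φ(u; v) = 1 − s(u, v − 1)/s(u, v)`. -/
noncomputable def pgPhi (σ u v : ℝ) : ℝ :=
  1 - pgS σ u (v - 1) / pgS σ u v

theorem pg_bound (σ b : ℝ) (n : ℕ) : Real.exp (-(b - n) ^ 2 / (2 * σ ^ 2)) ≤ 1 := by
  rw [Real.exp_le_one_iff]
  apply div_nonpos_of_nonpos_of_nonneg
  · have := sq_nonneg (b - n); linarith
  · positivity

theorem pg_summable (σ b a : ℝ) (ha : 0 ≤ a) :
    Summable (fun n : ℕ => a ^ n / (Nat.factorial n) * Real.exp (-(b - n) ^ 2 / (2 * σ ^ 2))) := by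
  refine Summable.of_nonneg_of_le (fun n => by positivity) (fun n => ?_)
    (Real.summable_pow_div_factorial a)
  exact mul_le_of_le_one_right (by positivity) (pg_bound σ b n)

theorem pg_pos (σ b a : ℝ) (ha : 0 < a) : 0 < pgS σ a b :=
  (pg_summable σ b a ha.le).tsum_pos (fun n => by positivity) 0 (by positivity)

theorem pg_shift (a : ℝ) (n : ℕ) :
    ((n + 1 : ℕ) : ℝ) * a ^ (n + 1 - 1) / (Nat.factorial (n + 1)) = a ^ n / Nat.factorial n := by
  rw [Nat.factorial_succ]
  push_cast
  have : (Nat.factorial n : ℝ) ≠ 0 := by positivity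
  have : (n : ℝ) + 1 ≠ 0 := by positivity
  field_simp

theorem pg_hasDerivAt (σ v t : ℝ) (ht : 0 < t) :
    HasDerivAt (fun t => pgS σ t v) (pgS σ t (v - 1)) t := by
  have hu : Summable (fun n : ℕ => (n : ℝ) * (t + 1) ^ (n - 1) / (Nat.factorial n)) := by
    rw [← summable_nat_add_iff 1]
    exact (Real.summable_pow_div_factorial (t + 1)).congr (fun n => (pg_shift _ n).symm)
  have key := hasDerivAt_tsum_of_isPreconnected (𝕜 := ℝ)
    (g := fun (n : ℕ) (a : ℝ) => a ^ n / (Nat.factorial n) * Real.exp (-(v - n) ^ 2 / (2 * σ ^ 2)))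
    (g' := fun (n : ℕ) (a : ℝ) => (n : ℝ) * a ^ (n - 1) / (Nat.factorial n) *
      Real.exp (-(v - n) ^ 2 / (2 * σ ^ 2)))
    (t := Set.Ioo 0 (t + 1)) (y₀ := t) (y := t) hu isOpen_Ioo isPreconnected_Ioo
    (fun n y _ => ((hasDerivAt_pow n y).div_const _).mul_const _)
    (fun n y hy => by
      have h0 : 0 ≤ y := hy.1.le
      rw [Real.norm_of_nonneg (by positivity)]
      refine (mul_le_of_le_one_right (by positivity) (pg_bound σ v n)).trans ?_
      have := hy.2.le
      gcongr)
    ⟨ht, by linarith⟩ (pg_summable σ v t ht.le) ⟨ht, by linarith⟩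
  refine key.congr_deriv ?_
  rw [tsum_eq_zero_add']
  · simp only [pg_shift, pgS]
    simp only [Nat.cast_zero, zero_mul, zero_div, zero_add]
    refine tsum_congr fun n => ?_
    push_cast
    ring_nf
  · simp only [pg_shift]
    refine (pg_summable σ (v - 1) t ht.le).congr fun n => ?_
    push_cast
    ring_nf

theorem negLogLikelihood_deriv (σ : ℝ) (hσ : 0 < σ) (v : ℝ) :
    (DifferentiableOn ℝ (fun t => t - Real.log (pgS σ t v)) (Set.Ioi (0 : ℝ)) ∧
      ∀ t : ℝ, 0 < t →
        HasDerivAt (fun t => t - Real.log (pgS σ t v)) (pgPhi σ t v) t) ∧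
    ∀ t : ℝ, 0 < t →
      HasDerivAt
        (fun t => -Real.log (Real.exp (-t) * pgS σ t v / Real.sqrt (2 * π * σ ^ 2)))
        (pgPhi σ t v) t := by
  have h1 : ∀ t : ℝ, 0 < t →
      HasDerivAt (fun t => t - Real.log (pgS σ t v)) (pgPhi σ t v) t := fun t ht =>
    (hasDerivAt_id t).sub ((pg_hasDerivAt σ v t ht).log (pg_pos σ v t ht).ne')
  refine ⟨⟨fun t ht => (h1 t ht).differentiableAt.differentiableWithinAt, h1⟩, fun t ht => ?_⟩
  have h2 := (h1 t ht).add_const (Real.log (Real.sqrt (2 * π * σ ^ 2)))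
  refine h2.congr_of_eventuallyEq ?_
  filter_upwards [lt_mem_nhds ht] with y hy
  have hp := pg_pos σ v y hy
  have hs : 0 < Real.sqrt (2 * π * σ ^ 2) := Real.sqrt_pos.mpr (by positivity)
  rw [Real.log_div (by positivity) hs.ne', Real.log_mul (by positivity) hp.ne', Real.log_exp]
  ring
end

section
/- Fix σ > 0 and a ≥ 0. For every b ∈ ℝ, the inequality s(a, b − 1)² ≤ e^{1/σ²} · s(a, b − 2) · s(a, b) holds. -/
open Real

theorem pgS_hasSum (σ a : ℝ) (ha : 0 ≤ a) (b : ℝ) :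
    HasSum (fun n : ℕ => a ^ n / (Nat.factorial n) * Real.exp (-(b - n) ^ 2 / (2 * σ ^ 2)))
      (pgS σ a b) := by
  apply Summable.hasSum
  refine Summable.of_nonneg_of_le (fun n => by positivity) (fun n => ?_)
    (Real.summable_pow_div_factorial a)
  apply mul_le_of_le_one_right (by positivity)
  rw [Real.exp_le_one_iff]
  apply div_nonpos_of_nonpos_of_nonneg
  · nlinarith [sq_nonneg (b - n)]
  · positivity

theorem pgS_logConvex_ineq (σ : ℝ) (hσ : 0 < σ) (a : ℝ) (ha : 0 ≤ a) (b : ℝ) :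
    pgS σ a (b - 1) ^ 2 ≤ Real.exp (1 / σ ^ 2) * (pgS σ a (b - 2) * pgS σ a b) := by
  have h0 := pgS_hasSum σ a ha b
  have h1 := pgS_hasSum σ a ha (b - 1)
  have h2 := pgS_hasSum σ a ha (b - 2)
  refine le_of_tendsto_of_tendsto' (Filter.Tendsto.pow h1 2)
    ((Filter.Tendsto.mul h2 h0).const_mul _) (fun s => ?_)
  rw [← mul_assoc, Finset.mul_sum _ _ (Real.exp (1 / σ ^ 2))]
  apply Finset.sum_sq_le_sum_mul_sum_of_sq_le_mul
  · intro i _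
    positivity
  · intro i _
    positivity
  · intro n _
    apply le_of_eq
    beta_reduce
    have key : Real.exp (-(b - 1 - n) ^ 2 / (2 * σ ^ 2)) ^ 2 = Real.exp (1 / σ ^ 2) *
        Real.exp (-(b - 2 - n) ^ 2 / (2 * σ ^ 2)) * Real.exp (-(b - n) ^ 2 / (2 * σ ^ 2)) := by
      rw [← Real.exp_nat_mul, ← Real.exp_add, ← Real.exp_add]
      congr 1
      field_simp
      push_cast
      ring
    rw [mul_pow, key]
    ring
end

section
/- (Proposition 1) Let p : ℝ → ℝ be a smooth probability density function (p ≥ 0, ∫_ℝ p = 1) that is not almost everywhere zero, let σ > 0, and let C > 0. Let p_σ = p ⋆ N(0, σ²) denote the convolution of p with the Gaussian density x ↦ (1/√(2πσ²)) e^{−x²/(2σ²)}. Then the derivative d/dx [ log p_σ(x) ] is bounded on the interval [−C, C]. -/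
open Real MeasureTheory

/-- The Gaussian-smoothed density `p_σ = p ⋆ N(0, σ²)` on `ℝ`. -/
noncomputable def gaussSmooth (p : ℝ → ℝ) (σ : ℝ) (x : ℝ) : ℝ :=
  ∫ t : ℝ, p t * ((Real.sqrt (2 * π * σ ^ 2))⁻¹ * Real.exp (-(x - t) ^ 2 / (2 * σ ^ 2)))

lemma kernel_aux (s σ : ℝ) (hσ : 0 < σ) :
    |s| * Real.exp (-s ^ 2 / (2 * σ ^ 2)) ≤ σ := by
  have h1 : s ^ 2 / (2 * σ ^ 2) + 1 ≤ Real.exp (s ^ 2 / (2 * σ ^ 2)) := Real.add_one_le_exp _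
  have h2 : |s| ≤ σ * (s ^ 2 / (2 * σ ^ 2) + 1) := by
    have : σ * (s ^ 2 / (2 * σ ^ 2) + 1) = (s ^ 2 + 2 * σ ^ 2) / (2 * σ) := by
      field_simp
    rw [this, le_div_iff₀ (by positivity)]
    nlinarith [sq_nonneg (|s| - σ), sq_abs s, sq_nonneg σ]
  have h3 : |s| ≤ σ * Real.exp (s ^ 2 / (2 * σ ^ 2)) :=
    h2.trans (mul_le_mul_of_nonneg_left h1 hσ.le)
  rw [neg_div, Real.exp_neg, ← div_eq_mul_inv, div_le_iff₀ (Real.exp_pos _)]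
  exact h3

/-- Proposition 1: for a smooth probability density `p` that is not a.e. zero,
the derivative of `log (p ⋆ N(0, σ²))` is bounded on `[−C, C]`. -/
theorem score_bounded_on_interval (p : ℝ → ℝ) (hp_smooth : ContDiff ℝ (⊤ : ℕ∞) p)
    (hp_nonneg : ∀ x, 0 ≤ p x) (hp_int : Integrable p)
    (hp_one : ∫ x, p x = 1)
    (hp_ne : ¬ (∀ᵐ x : ℝ, p x = 0))
    (σ : ℝ) (hσ : 0 < σ) (C : ℝ) (hC : 0 < C) :
    ∃ K : ℝ, ∀ x ∈ Set.Icc (-C) C,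
      |deriv (fun x => Real.log (gaussSmooth p σ x)) x| ≤ K := by
  set c : ℝ := (Real.sqrt (2 * π * σ ^ 2))⁻¹ with hc
  have hcpos : 0 < c := by
    rw [hc]; have := Real.pi_pos; positivity
  let F : ℝ → ℝ → ℝ := fun x t => p t * (c * Real.exp (-(x - t) ^ 2 / (2 * σ ^ 2)))
  let F' : ℝ → ℝ → ℝ := fun x t =>
    p t * (c * (Real.exp (-(x - t) ^ 2 / (2 * σ ^ 2)) * (-(2 * (x - t)) / (2 * σ ^ 2))))
  have hpc : Continuous p := hp_smooth.continuous
  have hFc : ∀ x, Continuous (F x) := fun x => by fun_prop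
  have hF'c : ∀ x, Continuous (F' x) := fun x => by fun_prop
  have hF'cx : ∀ t, Continuous (fun x => F' x t) := fun t => by fun_prop
  have hFint : ∀ x, Integrable (F x) := by
    intro x
    refine (hp_int.mul_const c).mono' (hFc x).aestronglyMeasurable (.of_forall fun t => ?_)
    have hexp : Real.exp (-(x - t) ^ 2 / (2 * σ ^ 2)) ≤ 1 := by
      rw [Real.exp_le_one_iff, neg_div]
      have : 0 ≤ (x - t) ^ 2 / (2 * σ ^ 2) := by positivity
      linarith
    have h0 := hp_nonneg t
    rw [Real.norm_of_nonneg (by positivity)]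
    exact mul_le_mul_of_nonneg_left (by nlinarith) h0
  have hbound : ∀ x t, ‖F' x t‖ ≤ p t * (c * (σ / σ ^ 2)) := by
    intro x t
    have h0 := hp_nonneg t
    have h1 := kernel_aux (x - t) σ hσ
    have : ‖F' x t‖ = p t * (c * (|x - t| * Real.exp (-(x - t) ^ 2 / (2 * σ ^ 2)) / σ ^ 2)) := by
      simp only [F', Real.norm_eq_abs, abs_mul, abs_div, abs_neg, abs_of_nonneg h0,
        abs_of_pos hcpos, Real.abs_exp, abs_two, abs_of_pos (pow_pos hσ 2)]
      field_simp
    rw [this]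
    gcongr
  have hbi : Integrable (fun t => p t * (c * (σ / σ ^ 2))) := hp_int.mul_const _
  have hderiv : ∀ x, HasDerivAt (gaussSmooth p σ) (∫ t, F' x t) x := by
    intro x
    refine (hasDerivAt_integral_of_dominated_loc_of_deriv_le (μ := volume) (F := F) (F' := F')
      (x₀ := x) (s := Set.univ) Filter.univ_mem
      (.of_forall fun y => (hFc y).aestronglyMeasurable) (hFint x)
      (hF'c x).aestronglyMeasurable (.of_forall fun t y _ => hbound y t) hbi
      (.of_forall fun t y _ => ?_)).2
    have h1 : HasDerivAt (fun y : ℝ => -(y - t) ^ 2 / (2 * σ ^ 2))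
        (-(2 * (y - t)) / (2 * σ ^ 2)) y := by
      have := ((((hasDerivAt_id y).sub_const t).pow 2).neg).div_const (2 * σ ^ 2)
      simpa using this
    exact (h1.exp.const_mul c).const_mul (p t)
  have hcont : Continuous (fun x => ∫ t, F' x t) :=
    continuous_of_dominated (fun x => (hF'c x).aestronglyMeasurable)
      (fun x => .of_forall (hbound x)) hbi (.of_forall hF'cx)
  have hgc : Continuous (gaussSmooth p σ) :=
    continuous_iff_continuousAt.2 fun x => (hderiv x).continuousAt
  have hnn : ∀ x t, 0 ≤ F x t := fun x t => by
    have := hp_nonneg t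
    positivity
  have hpos : ∀ x, gaussSmooth p σ x ≠ 0 := by
    intro x h
    have h' : ∫ t, F x t = 0 := h
    rw [integral_eq_zero_iff_of_nonneg (hnn x) (hFint x)] at h'
    apply hp_ne
    filter_upwards [h'] with t ht
    have h2 : c * Real.exp (-(x - t) ^ 2 / (2 * σ ^ 2)) ≠ 0 := by positivity
    exact (mul_eq_zero.1 ht).resolve_right h2
  obtain ⟨K, hK⟩ := (isCompact_Icc (a := -C) (b := C)).exists_bound_of_continuousOn
    (f := fun x => (∫ t, F' x t) / gaussSmooth p σ x) (hcont.div hgc hpos).continuousOn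
  refine ⟨K, fun x hx => ?_⟩
  rw [((hderiv x).log (hpos x)).deriv]
  exact hK x hx
end
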